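/- There is a unique function φ : [0,T] → ℝ satisfying e^{φ(t)²/2} N(φ(t)) = e^{r(T−t)}/2 for all t ∈ [0,T]; this φ is strictly decreasing on [0,T], satisfies φ(T) = 0 and φ(t) > 0 for every t ∈ [0,T), and is differentiable on [0,T] with φ′(t) = −r·N(φ(t)) / (φ(t)·N(φ(t)) + n(φ(t))). -/

import Mathlib

open MeasureTheory Real Set Filter

/-!
Put `G(x) = exp(x²/2) N(x)`. The equation for `φ` reads `G(φ(t)) = exp(r(T - t)) / 2`, so everything
follows from inverting `G`.

The derivative of `G` is `exp(x²/2) (x N(x) + n(x))`, and it is positive on the whole line because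
`x N(x) + n(x) = ∫_{-∞}^x (x - y) n(y) dy` (`mul_stdCdf_add_stdPdf_pos`), the integral of a function
that is positive on `(-∞, x)`. Hence `G` is continuous and strictly increasing, with `G(0) = 1/2`
and `G(x) ≥ exp(x²/2)/2` for `x ≥ 0`, so that `G` is unbounded above. By the intermediate value
theorem `G` has an inverse `g` on the open half-line `(G(-1), ∞)`, which contains all the values
`exp(r(T - t))/2 ≥ 1/2`, `t ∈ [0, T]`, in its interior; `g` is differentiable there by the inverse
function rule (`exists_inverse_G`), and `φ(t) = g(exp(r(T - t))/2)`.
-/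

/-- Standard normal cdf `N(x)`. -/
noncomputable def stdCdf (x : ℝ) : ℝ := ∫ y in Set.Iic x, Real.exp (-y ^ 2 / 2) / Real.sqrt (2 * Real.pi)

/-- Standard normal pdf `n(x)`. -/
noncomputable def stdPdf (x : ℝ) : ℝ := Real.exp (-x ^ 2 / 2) / Real.sqrt (2 * Real.pi)

lemma stdPdf_pos (x : ℝ) : 0 < stdPdf x := by
  unfold stdPdf; positivity

lemma continuous_stdPdf : Continuous stdPdf := by
  unfold stdPdf; fun_prop

lemma integrable_stdPdf : Integrable stdPdf := by
  have h := (integrable_exp_neg_mul_sq (b := 1 / 2) (by norm_num)).div_const (√(2 * π))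
  refine h.congr (Eventually.of_forall fun x => ?_)
  simp only [stdPdf]
  congr 2; ring

lemma integrable_mul_stdPdf : Integrable fun x => x * stdPdf x := by
  have h := (integrable_mul_exp_neg_mul_sq (b := 1 / 2) (by norm_num)).div_const (√(2 * π))
  refine h.congr (Eventually.of_forall fun x => ?_)
  simp only [stdPdf]
  rw [mul_div_assoc]
  congr 3; ring

lemma stdCdf_eq (x : ℝ) : stdCdf x = ∫ y in Iic x, stdPdf y := rfl

lemma stdCdf_zero : stdCdf 0 = 1 / 2 := by
  have h1 : stdCdf 0 = ∫ y in Iic (0 : ℝ), exp (-(1 / 2) * (-y) ^ 2) / √(2 * π) := by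
    unfold stdCdf
    congr 1; ext y
    congr 2; ring
  rw [h1, integral_comp_neg_Iic 0 fun y => exp (-(1 / 2) * y ^ 2) / √(2 * π), neg_zero,
    integral_div, integral_gaussian_Ioi]
  have h2 : π / (1 / 2) = 2 * π := by ring
  rw [h2]
  have : √(2 * π) ≠ 0 := by positivity
  field_simp

lemma hasDerivAt_stdCdf (x : ℝ) : HasDerivAt stdCdf (stdPdf x) x := by
  have h : stdCdf = fun u => stdCdf 0 + ∫ y in (0 : ℝ)..u, stdPdf y := by
    ext u
    rw [← intervalIntegral.integral_Iic_sub_Iic integrable_stdPdf.integrableOn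
      integrable_stdPdf.integrableOn, ← stdCdf_eq, ← stdCdf_eq]
    ring
  rw [h]
  exact (continuous_stdPdf.integral_hasStrictDerivAt 0 x).hasDerivAt.const_add _

lemma hasDerivAt_stdPdf (x : ℝ) : HasDerivAt stdPdf (-(x * stdPdf x)) x := by
  have h : HasDerivAt (fun x : ℝ => -x ^ 2 / 2) (-x) x := by
    convert! ((hasDerivAt_pow 2 x).neg.div_const 2) using 1
    simp only [Nat.cast_ofNat, Nat.add_one_sub_one, pow_one]
    ring
  convert! h.exp.div_const (√(2 * π)) using 1
  simp only [stdPdf]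
  ring

lemma tendsto_stdPdf_atBot : Tendsto stdPdf atBot (nhds 0) := by
  have h1 : Tendsto (fun x : ℝ => x ^ 2 / 2) atBot atTop :=
    Tendsto.atTop_div_const (by norm_num) <|
      ((tendsto_pow_atTop two_ne_zero).comp tendsto_neg_atBot_atTop).congr fun x => by simp
  have h2 := (tendsto_exp_neg_atTop_nhds_zero.comp h1).div_const (√(2 * π))
  rw [zero_div] at h2
  refine h2.congr fun x => ?_
  simp only [stdPdf, Function.comp_apply]
  congr 2; ring

lemma integral_Iic_mul_stdPdf (x : ℝ) : ∫ y in Iic x, -(y * stdPdf y) = stdPdf x := by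
  rw [integral_Iic_of_hasDerivAt_of_tendsto' (fun y _ => hasDerivAt_stdPdf y)
    integrable_mul_stdPdf.neg.integrableOn tendsto_stdPdf_atBot, sub_zero]

/-- The left-hand side equals `∫_{-∞}^x (x - y) n(y) dy`. -/
lemma mul_stdCdf_add_stdPdf_pos (x : ℝ) : 0 < x * stdCdf x + stdPdf x := by
  have hi1 : IntegrableOn (fun y => x * stdPdf y) (Iic x) :=
    (integrable_stdPdf.const_mul x).integrableOn
  have hi2 : IntegrableOn (fun y => -(y * stdPdf y)) (Iic x) :=
    integrable_mul_stdPdf.neg.integrableOn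
  have h : x * stdCdf x + stdPdf x = ∫ y in Iic x, (x * stdPdf y + -(y * stdPdf y)) := by
    rw [integral_add hi1 hi2, integral_Iic_mul_stdPdf, integral_const_mul, stdCdf_eq]
  have hi : IntegrableOn (fun y => x * stdPdf y + -(y * stdPdf y)) (Iic x) := hi1.add hi2
  rw [h, setIntegral_pos_iff_support_of_nonneg_ae _ hi]
  · have hsub : Ioo (x - 1) x ⊆
        (Function.support fun y => x * stdPdf y + -(y * stdPdf y)) ∩ Iic x := by
      intro y hy
      refine ⟨?_, hy.2.le⟩
      have := mul_pos (sub_pos.2 hy.2) (stdPdf_pos y)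
      rw [Function.mem_support]
      nlinarith
    refine lt_of_lt_of_le ?_ (measure_mono hsub)
    simp
  · refine (ae_restrict_iff' measurableSet_Iic).2 (Eventually.of_forall fun y hy => ?_)
    have := mul_nonneg (sub_nonneg.2 hy) (stdPdf_pos y).le
    simp only [Pi.zero_apply]
    nlinarith

/-- The function `G(x) = exp(x²/2) N(x)` to be inverted. -/
noncomputable def expCdf (x : ℝ) : ℝ := exp (x ^ 2 / 2) * stdCdf x

lemma hasDerivAt_expCdf (x : ℝ) :
    HasDerivAt expCdf (exp (x ^ 2 / 2) * (x * stdCdf x + stdPdf x)) x := by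
  have h : HasDerivAt (fun x : ℝ => x ^ 2 / 2) x x := by
    convert! ((hasDerivAt_pow 2 x).div_const 2) using 1
    simp
  convert! h.exp.mul (hasDerivAt_stdCdf x) using 1
  ring

lemma expCdf_deriv_pos (x : ℝ) : 0 < exp (x ^ 2 / 2) * (x * stdCdf x + stdPdf x) :=
  mul_pos (exp_pos _) (mul_stdCdf_add_stdPdf_pos x)

lemma strictMono_expCdf : StrictMono expCdf :=
  strictMono_of_hasDerivAt_pos hasDerivAt_expCdf expCdf_deriv_pos

lemma continuous_expCdf : Continuous expCdf :=
  continuous_iff_continuousAt.2 fun x => (hasDerivAt_expCdf x).continuousAt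

lemma expCdf_zero : expCdf 0 = 1 / 2 := by
  simp [expCdf, stdCdf_zero]

lemma exists_lt_expCdf (c : ℝ) : ∃ x, -1 < x ∧ c < expCdf x := by
  have hmono : StrictMono stdCdf := strictMono_of_hasDerivAt_pos hasDerivAt_stdCdf stdPdf_pos
  -- at `x = 2 (|c| + 1)` already `exp(x²/2) / 2 ≥ (x²/2) / 2 = (|c| + 1)² > c`
  refine ⟨2 * (|c| + 1), by linarith [abs_nonneg c], ?_⟩
  have h0 := abs_nonneg c
  have h1 : 1 / 2 ≤ stdCdf (2 * (|c| + 1)) := by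
    rw [← stdCdf_zero]; exact hmono.monotone (by linarith)
  have h2 := add_one_le_exp ((2 * (|c| + 1)) ^ 2 / 2)
  have h3 : exp ((2 * (|c| + 1)) ^ 2 / 2) * (1 / 2) ≤ expCdf (2 * (|c| + 1)) :=
    mul_le_mul_of_nonneg_left h1 (exp_pos _).le
  nlinarith [le_abs_self c]

/-- A right inverse of `G` on the half-line `(G(-1), ∞)`, with the inverse function rule. The lower
endpoint `-1` only serves to make `1/2 = G(0)` an interior point. -/
lemma exists_inverse_G : ∃ g : ℝ → ℝ, ∀ c, expCdf (-1) < c → expCdf (g c) = c ∧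
    HasDerivAt g (exp ((g c) ^ 2 / 2) * (g c * stdCdf (g c) + stdPdf (g c)))⁻¹ c := by
  have hex : ∀ c, ∃ x, expCdf (-1) < c → expCdf x = c := by
    intro c
    by_cases hc : expCdf (-1) < c
    · obtain ⟨b, hb, hcb⟩ := exists_lt_expCdf c
      obtain ⟨x, -, hx⟩ := intermediate_value_Icc hb.le continuous_expCdf.continuousOn
        ⟨hc.le, hcb.le⟩
      exact ⟨x, fun _ => hx⟩
    · exact ⟨0, fun h => absurd h hc⟩
  choose g hg using hex
  refine ⟨g, fun c hc => ⟨hg c hc, ?_⟩⟩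
  have hmono : StrictMonoOn g (Ioi (expCdf (-1))) := by
    intro a ha b hb hab
    rw [← strictMono_expCdf.lt_iff_lt, hg a ha, hg b hb]
    exact hab
  have himg : Ioi (-1) ⊆ g '' Ioi (expCdf (-1)) := by
    intro x hx
    have hx' : expCdf (-1) < expCdf x := strictMono_expCdf hx
    exact ⟨expCdf x, hx', strictMono_expCdf.injective (hg _ hx')⟩
  have hgc : -1 < g c := by
    rw [← strictMono_expCdf.lt_iff_lt, hg c hc]
    exact hc
  have hcont : ContinuousAt g c :=
    hmono.continuousAt_of_image_mem_nhds (Ioi_mem_nhds hc)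
      (mem_of_superset (Ioi_mem_nhds hgc) himg)
  exact (hasDerivAt_expCdf (g c)).of_local_left_inverse hcont (expCdf_deriv_pos _).ne'
    ((eventually_gt_nhds hc).mono fun y hy => hg y hy)

theorem phi_exists_unique (r T : ℝ) (hr : 0 < r) (hT : 0 < T) :
    ∃ φ : ℝ → ℝ,
      (∀ t ∈ Set.Icc 0 T,
        Real.exp ((φ t) ^ 2 / 2) * stdCdf (φ t) = Real.exp (r * (T - t)) / 2) ∧
      (∀ ψ : ℝ → ℝ,
        (∀ t ∈ Set.Icc 0 T,
          Real.exp ((ψ t) ^ 2 / 2) * stdCdf (ψ t) = Real.exp (r * (T - t)) / 2) →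
        Set.EqOn ψ φ (Set.Icc 0 T)) ∧
      StrictAntiOn φ (Set.Icc 0 T) ∧
      φ T = 0 ∧
      (∀ t, 0 ≤ t → t < T → 0 < φ t) ∧
      (∀ t ∈ Set.Icc 0 T,
        HasDerivWithinAt φ
          (-(r * stdCdf (φ t)) / (φ t * stdCdf (φ t) + stdPdf (φ t))) (Set.Icc 0 T) t) := by
  obtain ⟨g, hg⟩ := exists_inverse_G
  have hc : ∀ t ∈ Icc 0 T, expCdf (-1) < exp (r * (T - t)) / 2 := by
    intro t ht
    have h1 : expCdf (-1) < 1 / 2 := by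
      rw [← expCdf_zero]; exact strictMono_expCdf (by norm_num)
    have h2 : 1 ≤ exp (r * (T - t)) := one_le_exp (mul_nonneg hr.le (by linarith [ht.2]))
    linarith
  have heq : ∀ t ∈ Icc 0 T, expCdf (g (exp (r * (T - t)) / 2)) = exp (r * (T - t)) / 2 :=
    fun t ht => (hg _ (hc t ht)).1
  have hanti : StrictAntiOn (fun t => g (exp (r * (T - t)) / 2)) (Icc 0 T) := by
    intro s hs t ht hst
    rw [← strictMono_expCdf.lt_iff_lt, heq s hs, heq t ht]
    have : exp (r * (T - t)) < exp (r * (T - s)) :=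
      exp_lt_exp.2 (mul_lt_mul_of_pos_left (by linarith) hr)
    linarith
  have hTmem : T ∈ Icc 0 T := right_mem_Icc.2 hT.le
  have hzero : g (exp (r * (T - T)) / 2) = 0 := by
    apply strictMono_expCdf.injective
    rw [heq T hTmem, expCdf_zero]
    simp
  refine ⟨fun t => g (exp (r * (T - t)) / 2), heq, ?_, hanti, hzero, ?_, ?_⟩
  · intro ψ hψ t ht
    exact strictMono_expCdf.injective ((hψ t ht).trans (heq t ht).symm)
  · intro t h0 ht
    have := hanti ⟨h0, ht.le⟩ hTmem ht
    simpa only [hzero] using this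
  · intro t ht
    have hlin : HasDerivAt (fun t => r * (T - t)) (-r) t := by
      simpa using ((hasDerivAt_id t).const_sub T).const_mul r
    have hd := ((hg _ (hc t ht)).2.comp t (hlin.exp.div_const 2)).hasDerivWithinAt (s := Icc 0 T)
    have hE := heq t ht
    convert! hd using 1
    have hpos := mul_stdCdf_add_stdPdf_pos (g (exp (r * (T - t)) / 2))
    -- `exp(r(T - t))/2` in the chain rule is replaced by `G(φ(t))`, and `exp(φ(t)²/2)` cancels
    have key : exp (r * (T - t)) * -r / 2 = -(r * expCdf (g (exp (r * (T - t)) / 2))) := by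
      rw [hE]; ring
    rw [key, expCdf]
    beta_reduce
    generalize g (exp (r * (T - t)) / 2) = x at hpos ⊢
    have := exp_pos (x ^ 2 / 2)
    field_simp
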